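/- ∫₀¹ k(2k²-1) K(k)³ K'(k) dk = π⁵/128. -/

import Mathlib

open scoped Real
open MeasureTheory

noncomputable def EllK (k : ℝ) : ℝ :=
  ∫ x in (0:ℝ)..(1:ℝ), 1 / Real.sqrt ((1 - x^2) * (1 - k^2 * x^2))

noncomputable def EllE (k : ℝ) : ℝ :=
  ∫ x in (0:ℝ)..(1:ℝ), Real.sqrt ((1 - k^2 * x^2) / (1 - x^2))

noncomputable def EllK' (k : ℝ) : ℝ := EllK (Real.sqrt (1 - k^2))

/-!
The integral over `[0, π]` of the Legendre generating function `1 / √(1 - 2 z cos θ + z²)` is a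
holomorphic function `F` on the unit disc. On the upper half of the unit circle the generating
function has constant phase on either side of `θ = φ`, and the two pieces are the Mehler-Dirichlet
forms of elliptic integrals, so `F(e^{iφ}) = e^{-iφ/2} (K(cos (φ/2)) + i K(sin (φ/2)))`.

The mean value property of `(1 - z⁴) F(z)⁴`, whose value at `0` is `π⁴`, survives the passage to
the boundary because `K` has only a logarithmic singularity. Its real part on the circle is
`8 sin 2φ (B³ A - B A³)` with `B = K(cos (φ/2))` and `A = K(sin (φ/2))`; the reflection `φ ↦ π - φ`
exchanges the two terms up to sign, and `k = cos (φ/2)` turns what remains into the integral of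
`k (2k² - 1) K³ K'`.
-/

section

open Complex (I)
open Set Filter Topology ComplexConjugate

theorem ellK_integrand_le {k s x : ℝ} (hk : k ^ 2 < 1) (hs0 : 0 ≤ s) (hs : s ≤ 1 / 2)
    (hx : x ∈ Ioo 0 1) :
    1 / √((1 - x ^ 2) * (1 - k ^ 2 * x ^ 2)) ≤ (1 - k ^ 2) ^ (-s) * (1 - x) ^ (s - 1) := by
  obtain ⟨hx0, hx1⟩ := hx
  have hx_pos : 0 < 1 - x := by linarith
  have hk_pos : 0 < 1 - k ^ 2 := by linarith
  have hx_le : 1 - x ≤ 1 - x ^ 2 := by nlinarith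
  have hx_le' : 1 - x ≤ 1 - k ^ 2 * x ^ 2 := by nlinarith [sq_nonneg x]
  have hk_le : 1 - k ^ 2 ≤ 1 - k ^ 2 * x ^ 2 := by nlinarith [sq_nonneg k]
  have hkx_pos : 0 < 1 - k ^ 2 * x ^ 2 := by linarith
  rw [Real.rpow_neg hk_pos.le, ← neg_sub 1 s, Real.rpow_neg hx_pos.le, ← mul_inv, one_div]
  refine inv_anti₀ (by positivity) (Real.le_sqrt_of_sq_le ?_)
  calc ((1 - k ^ 2) ^ s * (1 - x) ^ (1 - s)) ^ 2
      = (1 - k ^ 2) ^ (2 * s) * ((1 - x) ^ (1 - 2 * s) * (1 - x)) := by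
        rw [mul_pow, ← Real.rpow_mul_natCast hk_pos.le, ← Real.rpow_mul_natCast hx_pos.le,
          ← Real.rpow_add_one hx_pos.ne']
        ring_nf
    _ ≤ (1 - k ^ 2 * x ^ 2) ^ (2 * s) * ((1 - k ^ 2 * x ^ 2) ^ (1 - 2 * s) * (1 - x ^ 2)) := by
        have : 0 ≤ 1 - 2 * s := by linarith
        gcongr
    _ = (1 - x ^ 2) * (1 - k ^ 2 * x ^ 2) := by
        rw [← mul_assoc, ← Real.rpow_add hkx_pos, add_sub_cancel, Real.rpow_one, mul_comm]

theorem intervalIntegrable_one_sub_rpow {r : ℝ} (hr : -1 < r) :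
    IntervalIntegrable (fun x : ℝ => (1 - x) ^ r) volume 0 1 := by
  simpa using
    ((intervalIntegral.intervalIntegrable_rpow' (a := 0) (b := 1) hr).comp_sub_left 1).symm

theorem integral_one_sub_rpow {r : ℝ} (hr : -1 < r) :
    ∫ x in (0 : ℝ)..1, (1 - x) ^ r = 1 / (r + 1) := by
  have hr' : r + 1 ≠ 0 := by linarith
  rw [intervalIntegral.integral_comp_sub_left (fun x : ℝ => x ^ r), integral_rpow (Or.inl hr)]
  simp [Real.zero_rpow hr']

theorem intervalIntegrable_ellK_integrand {k : ℝ} (hk : k ^ 2 < 1) :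
    IntervalIntegrable (fun x : ℝ => 1 / √((1 - x ^ 2) * (1 - k ^ 2 * x ^ 2))) volume 0 1 := by
  have hdom := (intervalIntegrable_one_sub_rpow (r := 1 / 2 - 1) (by norm_num)).const_mul
    ((1 - k ^ 2) ^ (-(1 / 2) : ℝ))
  rw [intervalIntegrable_iff_integrableOn_Ioo_of_le zero_le_one] at hdom ⊢
  refine hdom.mono' (Measurable.aestronglyMeasurable (by fun_prop)) ?_
  filter_upwards [ae_restrict_mem measurableSet_Ioo] with x hx
  rw [Real.norm_of_nonneg (by positivity)]
  exact ellK_integrand_le hk (by norm_num) le_rfl hx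

theorem ellK_nonneg (k : ℝ) : 0 ≤ EllK k :=
  intervalIntegral.integral_nonneg zero_le_one fun _ _ => by positivity

theorem ellK_le {k s : ℝ} (hk : k ^ 2 < 1) (hs0 : 0 < s) (hs : s ≤ 1 / 2) :
    EllK k ≤ (1 - k ^ 2) ^ (-s) / s := by
  have hr : -1 < s - 1 := by linarith
  calc EllK k ≤ ∫ x in (0 : ℝ)..1, (1 - k ^ 2) ^ (-s) * (1 - x) ^ (s - 1) :=
        intervalIntegral.integral_mono_on_of_le_Ioo zero_le_one
          (intervalIntegrable_ellK_integrand hk)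
          ((intervalIntegrable_one_sub_rpow hr).const_mul _)
          fun x hx => ellK_integrand_le hk hs0.le hs hx
    _ = (1 - k ^ 2) ^ (-s) / s := by
        rw [intervalIntegral.integral_const_mul, integral_one_sub_rpow hr, sub_add_cancel,
          mul_one_div]

theorem measurable_ellK : Measurable EllK := by
  have h : StronglyMeasurable fun p : ℝ × ℝ => 1 / √((1 - p.2 ^ 2) * (1 - p.1 ^ 2 * p.2 ^ 2)) :=
    Measurable.stronglyMeasurable (by fun_prop)
  unfold EllK
  simpa only [intervalIntegral.integral_of_le (zero_le_one' ℝ)] using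
    (h.integral_prod_right' (ν := volume.restrict (Ioc 0 1))).measurable

theorem cos_sub_cos_eq_two_mul_sin_half_sq_sub (θ φ : ℝ) :
    Real.cos θ - Real.cos φ = 2 * (Real.sin (φ / 2) ^ 2 - Real.sin (θ / 2) ^ 2) := by
  rw [Real.sin_sq_eq_half_sub, Real.sin_sq_eq_half_sub]
  ring_nf

section MehlerDirichlet

variable {φ : ℝ}

theorem sin_half_mem_Ioo (hφ : φ ∈ Ioo 0 π) : Real.sin (φ / 2) ∈ Ioo 0 1 :=
  ⟨Real.sin_pos_of_pos_of_lt_pi (by linarith [hφ.1]) (by linarith [hφ.1, hφ.2]), by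
    simpa using Real.strictMonoOn_sin (a := φ / 2) (b := π / 2)
      ⟨by linarith [hφ.1, hφ.2], by linarith [hφ.2]⟩ ⟨by linarith [Real.pi_pos], le_rfl⟩
      (by linarith [hφ.2])⟩

theorem ellK_integrand_comp_sin_half_div {θ : ℝ} (hφ : 0 < Real.sin (φ / 2))
    (hθ : 0 < Real.cos (θ / 2)) :
    1 / √((1 - (Real.sin (θ / 2) / Real.sin (φ / 2)) ^ 2) *
        (1 - Real.sin (φ / 2) ^ 2 * (Real.sin (θ / 2) / Real.sin (φ / 2)) ^ 2)) *
        (Real.cos (θ / 2) / (2 * Real.sin (φ / 2))) =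
      1 / √(2 * (Real.cos θ - Real.cos φ)) := by
  have hradicand : (1 - (Real.sin (θ / 2) / Real.sin (φ / 2)) ^ 2) *
      (1 - Real.sin (φ / 2) ^ 2 * (Real.sin (θ / 2) / Real.sin (φ / 2)) ^ 2) =
      (Real.cos (θ / 2) / (2 * Real.sin (φ / 2))) ^ 2 * (2 * (Real.cos θ - Real.cos φ)) := by
    rw [cos_sub_cos_eq_two_mul_sin_half_sq_sub, div_pow, div_pow, Real.cos_sq']
    field_simp
  rw [hradicand, Real.sqrt_mul (sq_nonneg _), Real.sqrt_sq (by positivity)]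
  field_simp

theorem hasDerivAt_sin_half_div (c θ : ℝ) :
    HasDerivAt (fun θ => Real.sin (θ / 2) / c) (Real.cos (θ / 2) / (2 * c)) θ :=
  (((hasDerivAt_id' θ).div_const 2).sin.div_const c).congr_deriv (by field_simp)

-- Substitute `x = sin (θ / 2) / sin (φ / 2)` in the elliptic integral of modulus `sin (φ / 2)`.
theorem mehlerDirichlet_left (hφ : φ ∈ Ioo 0 π) :
    IntervalIntegrable (fun θ => 1 / √(2 * (Real.cos θ - Real.cos φ))) volume 0 φ ∧
      ∫ θ in (0 : ℝ)..φ, 1 / √(2 * (Real.cos θ - Real.cos φ)) = EllK (Real.sin (φ / 2)) := by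
  obtain ⟨hk_pos, hk_lt⟩ := sin_half_mem_Ioo hφ
  obtain ⟨h0, hπ⟩ := hφ
  set k := Real.sin (φ / 2)
  have hcos {θ : ℝ} (hθ : θ ∈ Icc 0 φ) : 0 < Real.cos (θ / 2) :=
    Real.cos_pos_of_mem_Ioo ⟨by linarith [hθ.1], by linarith [hθ.2]⟩
  have hcont : ContinuousOn (fun θ => Real.sin (θ / 2) / k) (uIcc 0 φ) := by fun_prop
  have hderiv : ∀ θ ∈ Ioo (min 0 φ) (max 0 φ), HasDerivAt (fun θ => Real.sin (θ / 2) / k)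
    (Real.cos (θ / 2) / (2 * k)) θ := fun θ _ => hasDerivAt_sin_half_div k θ
  have hderiv_nonneg : ∀ θ ∈ Ioo (min 0 φ) (max 0 φ), 0 ≤ Real.cos (θ / 2) / (2 * k) := by
    rw [min_eq_left h0.le, max_eq_right h0.le]
    exact fun θ hθ => (div_pos (hcos (Ioo_subset_Icc_self hθ)) (by positivity)).le
  have hendpoints : Real.sin (0 / 2) / k = 0 ∧ Real.sin (φ / 2) / k = 1 :=
    ⟨by simp, div_self hk_pos.ne'⟩
  have hsubst : EqOn (fun θ => 1 / √((1 - (Real.sin (θ / 2) / k) ^ 2) *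
      (1 - k ^ 2 * (Real.sin (θ / 2) / k) ^ 2)) * (Real.cos (θ / 2) / (2 * k)))
      (fun θ => 1 / √(2 * (Real.cos θ - Real.cos φ))) (uIcc 0 φ) := fun θ hθ =>
    ellK_integrand_comp_sin_half_div hk_pos (hcos (uIcc_of_le h0.le ▸ hθ))
  constructor
  · refine IntervalIntegrable.congr_uIoo ?_ (hsubst.mono uIoo_subset_uIcc_self)
    refine (intervalIntegral.integrable_comp_mul_deriv_iff_of_deriv_nonneg hcont hderiv
      hderiv_nonneg (g := fun x => 1 / √((1 - x ^ 2) * (1 - k ^ 2 * x ^ 2)))).2 ?_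
    rw [hendpoints.1, hendpoints.2]
    exact intervalIntegrable_ellK_integrand ((sq_lt_one_iff₀ hk_pos.le).2 hk_lt)
  · rw [← intervalIntegral.integral_congr hsubst, EllK]
    have := intervalIntegral.integral_comp_mul_deriv_of_deriv_nonneg hcont hderiv
      hderiv_nonneg (g := fun x => 1 / √((1 - x ^ 2) * (1 - k ^ 2 * x ^ 2)))
    rwa [hendpoints.1, hendpoints.2] at this

theorem mehlerDirichlet_right (hφ : φ ∈ Ioo 0 π) :
    IntervalIntegrable (fun θ => 1 / √(2 * (Real.cos φ - Real.cos θ))) volume φ π ∧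
      ∫ θ in φ..π, 1 / √(2 * (Real.cos φ - Real.cos θ)) = EllK (Real.cos (φ / 2)) := by
  obtain ⟨hint, hval⟩ := mehlerDirichlet_left (φ := π - φ)
    ⟨by linarith [hφ.2], by linarith [hφ.1]⟩
  have hreflect (θ : ℝ) :
      Real.cos (π - θ) - Real.cos (π - φ) = Real.cos φ - Real.cos θ := by
    simp only [Real.cos_pi_sub]
    ring
  constructor
  · simpa only [hreflect, sub_sub_cancel, sub_zero] using (hint.comp_sub_left π).symm
  · rw [← Real.sin_pi_div_two_sub (φ / 2), ← sub_div, ← hval, ← sub_self π,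
      ← intervalIntegral.integral_comp_sub_left]
    simp only [hreflect]

end MehlerDirichlet

theorem ellK_cos_half_le {φ s : ℝ} (hφ : φ ∈ Ioo 0 π) (hs0 : 0 < s) (hs : s ≤ 1 / 2) :
    EllK (Real.cos (φ / 2)) ≤ (φ / π) ^ (-(2 * s)) / s := by
  have hφπ : 0 < φ / π := div_pos hφ.1 Real.pi_pos
  have hsin : φ / π ≤ Real.sin (φ / 2) := by
    have := Real.mul_le_sin (x := φ / 2) (by linarith [hφ.1]) (by linarith [hφ.2])
    rwa [div_mul_div_cancel₀' two_ne_zero] at this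
  have hcos : Real.cos (φ / 2) ^ 2 < 1 := by
    linarith [Real.sin_sq_add_cos_sq (φ / 2), pow_pos (hφπ.trans_le hsin) 2]
  calc EllK (Real.cos (φ / 2)) ≤ (1 - Real.cos (φ / 2) ^ 2) ^ (-s) / s := ellK_le hcos hs0 hs
    _ = Real.sin (φ / 2) ^ (-(2 * s)) / s := by
      rw [← Real.sin_sq, ← Real.rpow_natCast_mul (hφπ.trans_le hsin).le, mul_neg, Nat.cast_ofNat]
    _ ≤ (φ / π) ^ (-(2 * s)) / s := by
      gcongr ?_ / _
      exact Real.rpow_le_rpow_of_nonpos hφπ hsin (by linarith)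

theorem intervalIntegrable_ellK_cos_half_pow (n : ℕ) :
    IntervalIntegrable (fun φ => EllK (Real.cos (φ / 2)) ^ n) volume 0 π := by
  set s : ℝ := 1 / (2 * n + 2) with hs_def
  have hs0 : 0 < s := by positivity
  have hs : s ≤ 1 / 2 := one_div_le_one_div_of_le two_pos (by linarith [n.cast_nonneg (α := ℝ)])
  have hexp : -1 < -(2 * s) * n := by
    have : 2 * s * (n + 1) = 1 := by rw [hs_def]; field_simp
    linarith
  have hdom : IntervalIntegrable (fun φ : ℝ => (φ / π) ^ (-(2 * s) * n) / s ^ n) volume 0 π := by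
    have := (intervalIntegral.intervalIntegrable_rpow' (a := 0) (b := 1) hexp).comp_mul_left
      (c := π⁻¹)
    simpa [div_eq_inv_mul] using this.const_mul (s ^ n)⁻¹
  rw [intervalIntegrable_iff_integrableOn_Ioo_of_le Real.pi_pos.le] at hdom ⊢
  refine hdom.mono' ((measurable_ellK.comp (by fun_prop)).pow_const n).aestronglyMeasurable ?_
  filter_upwards [ae_restrict_mem measurableSet_Ioo] with φ hφ
  rw [Real.norm_of_nonneg (pow_nonneg (ellK_nonneg _) n),
    Real.rpow_mul_natCast (div_nonneg hφ.1.le Real.pi_pos.le), ← div_pow]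
  exact pow_le_pow_left₀ (ellK_nonneg _) (ellK_cos_half_le hφ hs0 hs) n

theorem intervalIntegrable_ellK_sin_half_pow (n : ℕ) :
    IntervalIntegrable (fun φ => EllK (Real.sin (φ / 2)) ^ n) volume 0 π := by
  simpa [sub_div, Real.cos_pi_div_two_sub] using
    ((intervalIntegrable_ellK_cos_half_pow n).comp_sub_left π).symm

theorem aestronglyMeasurable_deriv_of_eventually {𝕜 E α : Type*} [NontriviallyNormedField 𝕜]
    [NormedAddCommGroup E] [NormedSpace 𝕜 E] [MeasurableSpace α] {μ : Measure α}
    {F : 𝕜 → α → E} {z : 𝕜} (hF : ∀ᶠ w in 𝓝 z, AEStronglyMeasurable (F w) μ)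
    (hd : ∀ᵐ t ∂μ, DifferentiableAt 𝕜 (F · t) z) :
    AEStronglyMeasurable (fun t => deriv (F · t) z) μ := by
  obtain ⟨w, hw⟩ := exists_seq_tendsto (𝓝[≠] z)
  obtain ⟨N, hN⟩ := eventually_atTop.1 ((hw.mono_right nhdsWithin_le_nhds).eventually hF)
  refine aestronglyMeasurable_of_tendsto_ae atTop (f := fun n t => slope (F · t) z (w (n + N)))
    (fun n => ?_) ?_
  · simp only [slope_def_module]
    exact ((hN _ (Nat.le_add_left N n)).sub hF.self_of_nhds).const_smul _
  · filter_upwards [hd] with t ht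
    exact (hasDerivAt_iff_tendsto_slope.1 ht.hasDerivAt).comp
      (hw.comp (tendsto_add_atTop_nat N))

theorem differentiableOn_intervalIntegral {E : Type*} [NormedAddCommGroup E] [NormedSpace ℂ E]
    {F : ℂ → ℝ → E} {U : Set ℂ} {a b : ℝ} (hU : IsOpen U)
    (hF : ContinuousOn (Function.uncurry F) (U ×ˢ uIcc a b))
    (hd : ∀ t ∈ uIcc a b, DifferentiableOn ℂ (F · t) U) :
    DifferentiableOn ℂ (fun z => ∫ t in a..b, F z t) U := by
  intro z hz
  obtain ⟨R, hR, hRU⟩ := Metric.nhds_basis_closedBall.mem_iff.1 (hU.mem_nhds hz)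
  obtain ⟨C, hC⟩ := ((isCompact_closedBall z R).prod isCompact_uIcc).exists_bound_of_continuousOn
    (hF.mono (prod_mono_left hRU))
  have hF_cont {w : ℂ} (hw : w ∈ U) : ContinuousOn (F w) (uIcc a b) :=
    hF.comp (f := fun t => (w, t)) (by fun_prop) fun t ht => ⟨hw, ht⟩
  have hF_meas : ∀ᶠ w in 𝓝 z, AEStronglyMeasurable (F w) (volume.restrict (uIoc a b)) := by
    filter_upwards [hU.mem_nhds hz] with w hw
    exact ((hF_cont hw).mono uIoc_subset_uIcc).aestronglyMeasurable measurableSet_uIoc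
  have hd_at {t : ℝ} (ht : t ∈ uIoc a b) {w : ℂ} (hw : w ∈ U) : DifferentiableAt ℂ (F · t) w :=
    (hd t (uIoc_subset_uIcc ht)).differentiableAt (hU.mem_nhds hw)
  have hhalf {w v : ℂ} (hw : w ∈ Metric.ball z (R / 2)) (hv : v ∈ Metric.closedBall w (R / 2)) :
      v ∈ Metric.closedBall z R := by
    rw [Metric.mem_ball] at hw
    rw [Metric.mem_closedBall] at hv ⊢
    linarith [dist_triangle v w z]
  refine (intervalIntegral.hasDerivAt_integral_of_dominated_loc_of_deriv_le
    (F' := fun w t => deriv (F · t) w) (bound := fun _ => C / (R / 2))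
    (Metric.ball_mem_nhds z (half_pos hR)) hF_meas (hF_cont hz).intervalIntegrable
    (aestronglyMeasurable_deriv_of_eventually hF_meas ?_) (.of_forall fun t ht w hw => ?_)
    intervalIntegrable_const
    (.of_forall fun t ht w hw => ?_)).2.differentiableAt.differentiableWithinAt
  · filter_upwards [ae_restrict_mem measurableSet_uIoc] with t ht
    exact hd_at ht hz
  · refine Complex.norm_deriv_le_of_forall_mem_sphere_norm_le (half_pos hR)
      ((hd t (uIoc_subset_uIcc ht)).diffContOnCl_ball fun v hv => hRU (hhalf hw hv)) fun v hv => ?_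
    exact hC (v, t) ⟨hhalf hw (Metric.sphere_subset_closedBall hv), uIoc_subset_uIcc ht⟩
  · exact (hd_at ht (hRU (hhalf hw (Metric.mem_closedBall_self (half_pos hR).le)))).hasDerivAt

section MeanValue

variable {G : ℂ → ℂ}

theorem integral_zero_two_pi_eq_two_mul_of_neg_eq {f : ℝ → ℝ} (hf : Continuous f)
    (hper : Function.Periodic f (2 * π)) (heven : ∀ φ, f (-φ) = f φ) :
    ∫ φ in (0 : ℝ)..2 * π, f φ = 2 * ∫ φ in (0 : ℝ)..π, f φ := by
  have hneg : ∫ φ in -π..0, f φ = ∫ φ in (0 : ℝ)..π, f φ := by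
    simpa [heven] using intervalIntegral.integral_comp_neg f (a := -π) (b := 0)
  have hshift := hper.intervalIntegral_add_eq 0 (-π)
  rw [zero_add, show -π + 2 * π = π by ring] at hshift
  rw [hshift, ← intervalIntegral.integral_add_adjacent_intervals (b := 0)
    (hf.intervalIntegrable _ _) (hf.intervalIntegrable _ _), hneg, two_mul]

theorem integral_re_circleMap_eq_pi_mul {r : ℝ} (hr : 0 < r)
    (hG : DiffContOnCl ℂ G (Metric.ball 0 r))
    (hconj : ∀ z ∈ Metric.sphere 0 r, G (conj z) = conj (G z)) :
    ∫ φ in (0 : ℝ)..π, (G (circleMap 0 r φ)).re = π * (G 0).re := by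
  have hcont : Continuous fun φ => G (circleMap 0 r φ) :=
    hG.continuousOn_ball.comp_continuous (continuous_circleMap 0 r)
      (circleMap_mem_closedBall 0 hr.le)
  have hmean : ∫ φ in (0 : ℝ)..2 * π, G (circleMap 0 r φ) = (2 * π : ℝ) • G 0 := by
    have haverage : Real.circleAverage G 0 r = G 0 :=
      DiffContOnCl.circleAverage (by rwa [abs_of_pos hr])
    rw [← haverage, Real.circleAverage_def, smul_inv_smul₀ Real.two_pi_pos.ne']
  have heven (φ : ℝ) : (G (circleMap 0 r (-φ))).re = (G (circleMap 0 r φ)).re := by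
    rw [← conj_circleMap_zero, hconj _ (circleMap_mem_sphere 0 hr.le φ), Complex.conj_re]
  have hre : ∫ φ in (0 : ℝ)..2 * π, (G (circleMap 0 r φ)).re = 2 * π * (G 0).re := by
    have := Complex.reCLM.intervalIntegral_comp_comm
      (hcont.intervalIntegrable (μ := volume) 0 (2 * π))
    rw [hmean] at this
    simpa using this
  have := integral_zero_two_pi_eq_two_mul_of_neg_eq (Complex.continuous_re.comp hcont)
    (fun φ => by simp only [Function.comp_apply, periodic_circleMap 0 r φ]) heven
  simp only [Function.comp_apply, hre] at this
  linarith

theorem integral_re_radialLimit_eq_pi_mul {g : ℝ → ℂ} {bound : ℝ → ℝ}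
    (hG : DifferentiableOn ℂ G (Metric.ball 0 1))
    (hconj : ∀ z ∈ Metric.ball 0 1, G (conj z) = conj (G z))
    (hbound : ∀ φ ∈ Ioo 0 π, ∀ r ∈ Ioo (0 : ℝ) 1, ‖G (circleMap 0 r φ)‖ ≤ bound φ)
    (hint : IntervalIntegrable bound volume 0 π)
    (hlim : ∀ φ ∈ Ioo 0 π, Tendsto (fun r => G (circleMap 0 r φ)) (𝓝[<] 1) (𝓝 (g φ))) :
    ∫ φ in (0 : ℝ)..π, (g φ).re = π * (G 0).re := by
  have hmem : ∀ᶠ r : ℝ in 𝓝[<] 1, r ∈ Ioo (0 : ℝ) 1 := Ioo_mem_nhdsLT zero_lt_one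
  have hIoo {p : ℝ → Prop} (hp : ∀ φ ∈ Ioo 0 π, p φ) : ∀ᵐ φ, φ ∈ uIoc 0 π → p φ := by
    rw [uIoc_of_le Real.pi_pos.le]
    filter_upwards [Measure.ae_ne volume π] with φ hφ hmem
    exact hp φ ⟨hmem.1, lt_of_le_of_ne hmem.2 hφ⟩
  have hlim_int : Tendsto (fun r : ℝ => ∫ φ in (0 : ℝ)..π, (G (circleMap 0 r φ)).re) (𝓝[<] 1)
      (𝓝 (∫ φ in (0 : ℝ)..π, (g φ).re)) := by
    refine intervalIntegral.tendsto_integral_filter_of_dominated_convergence bound ?_ ?_ hint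
      (hIoo fun φ hφ => (Complex.continuous_re.tendsto _).comp (hlim φ hφ))
    · filter_upwards [hmem] with r hr
      refine (Complex.continuous_re.comp (hG.continuousOn.comp_continuous
        (continuous_circleMap 0 r) fun φ => ?_)).aestronglyMeasurable
      simpa [abs_of_pos hr.1] using hr.2
    · filter_upwards [hmem] with r hr
      exact hIoo fun φ hφ => (Complex.abs_re_le_norm _).trans (hbound φ hφ r hr)
  refine tendsto_nhds_unique hlim_int (tendsto_const_nhds.congr' ?_)
  filter_upwards [hmem] with r hr
  refine (integral_re_circleMap_eq_pi_mul hr.1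
    (hG.diffContOnCl_ball (Metric.closedBall_subset_ball hr.2)) fun z hz => hconj z ?_).symm
  exact Metric.closedBall_subset_ball hr.2 (Metric.sphere_subset_closedBall hz)

end MeanValue

section InvSqrtOneSub

/-- The branch of `1 / √(1 - w)` that is holomorphic off the ray `[1, ∞)`. -/
noncomputable def invSqrtOneSub (w : ℂ) : ℂ :=
  (1 - w) ^ (-(1 / 2) : ℂ)

variable {w : ℂ}

theorem one_sub_mem_slitPlane (hw : ‖w‖ ≤ 1) (hw1 : w ≠ 1) : 1 - w ∈ Complex.slitPlane := by
  rw [Complex.mem_slitPlane_iff, Complex.sub_re, Complex.one_re, Complex.sub_im, Complex.one_im,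
    zero_sub, neg_ne_zero, or_iff_not_imp_right, not_not]
  intro him
  have hle := (Complex.re_le_norm w).trans hw
  have hne : w.re ≠ 1 := fun hre => hw1 (Complex.ext hre him)
  exact sub_pos.2 (hle.lt_of_ne hne)

theorem differentiableAt_invSqrtOneSub (hw : 1 - w ∈ Complex.slitPlane) :
    DifferentiableAt ℂ invSqrtOneSub w :=
  (differentiableAt_id.const_sub 1).cpow_const hw

theorem differentiableOn_invSqrtOneSub :
    DifferentiableOn ℂ invSqrtOneSub (Metric.ball 0 1) := by
  intro w hw
  rw [mem_ball_zero_iff] at hw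
  have hw1 : w ≠ 1 := by
    rintro rfl
    simp at hw
  exact (differentiableAt_invSqrtOneSub
    (one_sub_mem_slitPlane hw.le hw1)).differentiableWithinAt

theorem invSqrtOneSub_one : invSqrtOneSub 1 = 0 := by
  simp [invSqrtOneSub]

theorem invSqrtOneSub_conj (hw : ‖w‖ ≤ 1) : invSqrtOneSub (conj w) = conj (invSqrtOneSub w) := by
  rcases eq_or_ne w 1 with rfl | hw1
  · simp [invSqrtOneSub_one]
  · have harg := Complex.slitPlane_arg_ne_pi (one_sub_mem_slitPlane hw hw1)
    rw [invSqrtOneSub, invSqrtOneSub, ← map_one conj, ← map_sub, Complex.conj_cpow _ _ harg]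
    simp [map_ofNat]

theorem norm_invSqrtOneSub (w : ℂ) : ‖invSqrtOneSub w‖ = (√‖1 - w‖)⁻¹ := by
  have h := Complex.norm_cpow_real (1 - w) (-(1 / 2))
  push_cast at h
  rw [invSqrtOneSub, h, Real.rpow_neg (norm_nonneg _), Real.sqrt_eq_rpow]

theorem norm_sub_le_two_mul_norm_sub_smul {E : Type*} [SeminormedAddCommGroup E] [NormedSpace ℝ E]
    {u v : E} {r : ℝ} (huv : ‖u‖ ≤ ‖v‖) (hr0 : 0 ≤ r) (hr1 : r ≤ 1) :
    ‖v - u‖ ≤ 2 * ‖v - r • u‖ := by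
  have hgap : ‖r • u - u‖ = ‖u‖ - ‖r • u‖ := by
    calc ‖r • u - u‖ = ‖(r - 1) • u‖ := by rw [sub_smul, one_smul]
      _ = ‖u‖ - ‖r • u‖ := by
        rw [norm_smul, norm_smul, Real.norm_of_nonneg hr0, Real.norm_of_nonpos (by linarith)]
        ring
  calc ‖v - u‖ ≤ ‖v - r • u‖ + ‖r • u - u‖ := norm_sub_le_norm_sub_add_norm_sub v _ u
    _ ≤ 2 * ‖v - r • u‖ := by linarith [norm_sub_norm_le v (r • u)]

theorem circleMap_zero_one_ne_one {x : ℝ} (hx : |x| < 2 * π) (hx0 : x ≠ 0) :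
    circleMap 0 1 x ≠ 1 := by
  intro h
  refine hx0 (eq_of_circleMap_eq (c := 0) (R := 1) one_ne_zero (by simpa using hx) ?_)
  simpa [circleMap_zero] using h

theorem tendsto_invSqrtOneSub_circleMap {x : ℝ} (hx : circleMap 0 1 x ≠ 1) :
    Tendsto (fun r => invSqrtOneSub (circleMap 0 r x)) (𝓝 1)
      (𝓝 (invSqrtOneSub (circleMap 0 1 x))) := by
  have hslit := one_sub_mem_slitPlane (by simp) hx
  refine (differentiableAt_invSqrtOneSub hslit).continuousAt.tendsto.comp ?_
  simp only [circleMap_zero]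
  exact Continuous.tendsto (by fun_prop) 1

theorem norm_invSqrtOneSub_circleMap_le {x r : ℝ} (hx : circleMap 0 1 x ≠ 1) (hr0 : 0 ≤ r)
    (hr1 : r ≤ 1) :
    ‖invSqrtOneSub (circleMap 0 r x)‖ ≤ √2 * ‖invSqrtOneSub (circleMap 0 1 x)‖ := by
  have hpos : 0 < ‖1 - circleMap 0 1 x‖ := norm_pos_iff.2 (sub_ne_zero.2 hx.symm)
  have hle : ‖1 - circleMap 0 1 x‖ ≤ 2 * ‖1 - circleMap 0 r x‖ := by
    simpa [circleMap_zero] using norm_sub_le_two_mul_norm_sub_smul (u := circleMap 0 1 x)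
      (v := (1 : ℂ)) (by simp) hr0 hr1
  rw [norm_invSqrtOneSub, norm_invSqrtOneSub, ← div_eq_mul_inv, ← inv_div,
    ← Real.sqrt_div' _ two_pos.le]
  gcongr
  linarith

theorem circleMap_zero_cpow_ofReal {ρ t : ℝ} (hρ : 0 ≤ ρ) (ht : t ∈ Ioc (-π) π) (s : ℝ) :
    circleMap 0 ρ t ^ (s : ℂ) = circleMap 0 (ρ ^ s) (s * t) := by
  rw [circleMap_zero, circleMap_zero]
  rcases hρ.eq_or_lt with rfl | hρ_pos
  · rcases eq_or_ne s 0 with rfl | hs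
    · simp
    · simp [hs, Real.zero_rpow hs]
  · have hlog : Complex.log (Complex.exp (t * I)) = t * I :=
      Complex.log_exp (by simpa using ht.1) (by simpa using ht.2)
    rw [Complex.cpow_def_of_ne_zero (by simp [hρ_pos.ne']),
      Complex.log_ofReal_mul hρ_pos (Complex.exp_ne_zero _), hlog, Real.rpow_def_of_pos hρ_pos,
      Complex.ofReal_exp, ← Complex.exp_add]
    push_cast
    ring_nf

theorem one_sub_circleMap_zero_one (x : ℝ) :
    1 - circleMap 0 1 x = circleMap 0 (2 * Real.sin (x / 2)) ((x - π) / 2) := by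
  have hcos : Real.cos x = 1 - 2 * Real.sin (x / 2) ^ 2 := by
    rw [Real.sin_sq_eq_half_sub, mul_div_cancel₀ x two_ne_zero]
    ring
  have hsin : Real.sin x = 2 * Real.sin (x / 2) * Real.cos (x / 2) := by
    rw [← Real.sin_two_mul, mul_div_cancel₀ x two_ne_zero]
  apply Complex.ext
  · rw [circleMap_zero_re, sub_div, Real.cos_sub_pi_div_two, Complex.sub_re, Complex.one_re,
      circleMap_zero_re, hcos]
    ring
  · rw [circleMap_zero_im, sub_div, Real.sin_sub_pi_div_two, Complex.sub_im, Complex.one_im,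
      circleMap_zero_im, hsin]
    ring

theorem invSqrtOneSub_circleMap_zero_one {x : ℝ} (hx : x ∈ Icc 0 (2 * π)) :
    invSqrtOneSub (circleMap 0 1 x) = circleMap 0 (√(2 * Real.sin (x / 2)))⁻¹ ((π - x) / 4) := by
  have hsin : 0 ≤ Real.sin (x / 2) :=
    Real.sin_nonneg_of_nonneg_of_le_pi (by linarith [hx.1]) (by linarith [hx.2])
  have h := circleMap_zero_cpow_ofReal (mul_nonneg two_pos.le hsin) (t := (x - π) / 2)
    ⟨by linarith [hx.1, Real.pi_pos], by linarith [hx.2, Real.pi_pos]⟩ (-(1 / 2))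
  rw [Real.rpow_neg (by positivity), ← Real.sqrt_eq_rpow] at h
  push_cast at h
  rw [invSqrtOneSub, one_sub_circleMap_zero_one, h]
  ring_nf

theorem invSqrtOneSub_circleMap_zero_one_neg {x : ℝ} (hx : x ∈ Icc 0 (2 * π)) :
    invSqrtOneSub (circleMap 0 1 (-x)) =
      circleMap 0 (√(2 * Real.sin (x / 2)))⁻¹ (-((π - x) / 4)) := by
  rw [← conj_circleMap_zero, invSqrtOneSub_conj (by simp), invSqrtOneSub_circleMap_zero_one hx,
    conj_circleMap_zero]

end InvSqrtOneSub

section LegendreIntegral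

/-- The generating function `1 / √(1 - 2 z cos θ + z ^ 2)` of the Legendre polynomials, factored
over the roots `exp (± i θ)` so that each factor is a principal branch on the unit disc. -/
noncomputable def legendreKernel (z : ℂ) (θ : ℝ) : ℂ :=
  invSqrtOneSub (z * circleMap 0 1 θ) * invSqrtOneSub (z * circleMap 0 1 (-θ))

/-- The integral over `[0, π]` of the generating function of the Legendre polynomials; it is
`2 K(z)` continued to the unit disc. -/
noncomputable def legendreIntegral (z : ℂ) : ℂ :=
  ∫ θ in (0 : ℝ)..π, legendreKernel z θ

variable {φ θ r : ℝ} {z : ℂ}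

theorem legendreKernel_circleMap (r φ θ : ℝ) :
    legendreKernel (circleMap 0 r φ) θ =
      invSqrtOneSub (circleMap 0 r (φ + θ)) * invSqrtOneSub (circleMap 0 r (φ - θ)) := by
  rw [legendreKernel, circleMap_zero_mul, circleMap_zero_mul, mul_one, sub_eq_add_neg]

theorem eqOn_legendreKernel_left (hφ : φ ∈ Ioo 0 π) :
    EqOn (legendreKernel (circleMap 0 1 φ))
      (fun θ => circleMap 0 (1 / √(2 * (Real.cos θ - Real.cos φ))) ((π - φ) / 2)) (uIcc 0 φ) := by
  intro θ hθ
  obtain ⟨hθ0, hθφ⟩ := uIcc_of_le hφ.1.le ▸ hθ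
  obtain ⟨hφ0, hφπ⟩ := hφ
  have hsin : 0 ≤ Real.sin ((φ + θ) / 2) :=
    Real.sin_nonneg_of_nonneg_of_le_pi (by linarith) (by linarith)
  have hcos : 2 * (Real.cos θ - Real.cos φ) =
      2 * Real.sin ((φ + θ) / 2) * (2 * Real.sin ((φ - θ) / 2)) := by
    rw [Real.cos_sub_cos, ← neg_sub φ θ, neg_div, Real.sin_neg, add_comm θ φ]
    ring
  rw [legendreKernel_circleMap, invSqrtOneSub_circleMap_zero_one ⟨by linarith, by linarith⟩,
    invSqrtOneSub_circleMap_zero_one ⟨by linarith, by linarith⟩, circleMap_zero_mul, ← mul_inv,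
    ← Real.sqrt_mul (by positivity), ← hcos, ← one_div]
  ring_nf

theorem eqOn_legendreKernel_right (hφ : φ ∈ Ioo 0 π) :
    EqOn (legendreKernel (circleMap 0 1 φ))
      (fun θ => circleMap 0 (1 / √(2 * (Real.cos φ - Real.cos θ))) (-(φ / 2))) (uIcc φ π) := by
  intro θ hθ
  obtain ⟨hφθ, hθπ⟩ := uIcc_of_le hφ.2.le ▸ hθ
  obtain ⟨hφ0, hφπ⟩ := hφ
  have hsin : 0 ≤ Real.sin ((φ + θ) / 2) :=
    Real.sin_nonneg_of_nonneg_of_le_pi (by linarith) (by linarith)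
  have hcos : 2 * (Real.cos φ - Real.cos θ) =
      2 * Real.sin ((φ + θ) / 2) * (2 * Real.sin ((θ - φ) / 2)) := by
    rw [Real.cos_sub_cos, ← neg_sub θ φ, neg_div, Real.sin_neg]
    ring
  rw [legendreKernel_circleMap, ← neg_sub θ φ,
    invSqrtOneSub_circleMap_zero_one ⟨by linarith, by linarith⟩,
    invSqrtOneSub_circleMap_zero_one_neg ⟨by linarith, by linarith⟩, circleMap_zero_mul, ← mul_inv,
    ← Real.sqrt_mul (by positivity), ← hcos, ← one_div]
  ring_nf

theorem intervalIntegrable_circleMap_radius {f : ℝ → ℝ} {a b : ℝ}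
    (hf : IntervalIntegrable f volume a b) (t : ℝ) :
    IntervalIntegrable (fun θ => circleMap 0 (f θ) t) volume a b := by
  have hf' : IntervalIntegrable (fun θ => (f θ : ℂ)) volume a b := ⟨hf.1.ofReal, hf.2.ofReal⟩
  simpa only [circleMap_zero] using hf'.mul_const _

theorem intervalIntegrable_legendreKernel_left (hφ : φ ∈ Ioo 0 π) :
    IntervalIntegrable (legendreKernel (circleMap 0 1 φ)) volume 0 φ :=
  (intervalIntegrable_circleMap_radius (mehlerDirichlet_left hφ).1 _).congr_uIoo
    ((eqOn_legendreKernel_left hφ).symm.mono uIoo_subset_uIcc_self)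

theorem intervalIntegrable_legendreKernel_right (hφ : φ ∈ Ioo 0 π) :
    IntervalIntegrable (legendreKernel (circleMap 0 1 φ)) volume φ π :=
  (intervalIntegrable_circleMap_radius (mehlerDirichlet_right hφ).1 _).congr_uIoo
    ((eqOn_legendreKernel_right hφ).symm.mono uIoo_subset_uIcc_self)

theorem legendreIntegral_circleMap_one (hφ : φ ∈ Ioo 0 π) :
    legendreIntegral (circleMap 0 1 φ) =
      circleMap 0 1 (-(φ / 2)) * (EllK (Real.cos (φ / 2)) + EllK (Real.sin (φ / 2)) * I) := by
  have hpull (f : ℝ → ℝ) (t a b : ℝ) :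
      ∫ θ in a..b, circleMap 0 (f θ) t = circleMap 0 (∫ θ in a..b, f θ) t := by
    simp only [circleMap_zero, intervalIntegral.integral_mul_const,
      intervalIntegral.integral_ofReal]
  rw [legendreIntegral, ← intervalIntegral.integral_add_adjacent_intervals
    (intervalIntegrable_legendreKernel_left hφ) (intervalIntegrable_legendreKernel_right hφ),
    intervalIntegral.integral_congr (eqOn_legendreKernel_left hφ),
    intervalIntegral.integral_congr (eqOn_legendreKernel_right hφ), hpull, hpull,
    (mehlerDirichlet_left hφ).2, (mehlerDirichlet_right hφ).2]
  have hrot (R : ℝ) : circleMap 0 R ((π - φ) / 2) = R * I * circleMap 0 1 (-(φ / 2)) := by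
    rw [← zero_add (R * I), ← circleMap_pi_div_two, circleMap_zero_mul, mul_one]
    ring_nf
  rw [hrot, circleMap_zero, circleMap_zero]
  push_cast
  ring

theorem integral_norm_legendreKernel_circleMap_one (hφ : φ ∈ Ioo 0 π) :
    ∫ θ in (0 : ℝ)..π, ‖legendreKernel (circleMap 0 1 φ) θ‖ =
      EllK (Real.cos (φ / 2)) + EllK (Real.sin (φ / 2)) := by
  rw [← intervalIntegral.integral_add_adjacent_intervals
    (intervalIntegrable_legendreKernel_left hφ).norm
    (intervalIntegrable_legendreKernel_right hφ).norm,
    intervalIntegral.integral_congr fun θ hθ => congrArg norm (eqOn_legendreKernel_left hφ hθ),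
    intervalIntegral.integral_congr fun θ hθ => congrArg norm (eqOn_legendreKernel_right hφ hθ)]
  simp only [norm_circleMap_zero, abs_of_nonneg (one_div_nonneg.2 (Real.sqrt_nonneg _)),
    (mehlerDirichlet_left hφ).2, (mehlerDirichlet_right hφ).2, add_comm]

theorem circleMap_add_ne_one_and_sub_ne_one (hφ : φ ∈ Ioo 0 π) (hθ : θ ∈ Icc 0 π) (hne : θ ≠ φ) :
    circleMap 0 1 (φ + θ) ≠ 1 ∧ circleMap 0 1 (φ - θ) ≠ 1 := by
  obtain ⟨hφ0, hφπ⟩ := hφ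
  obtain ⟨hθ0, hθπ⟩ := hθ
  exact ⟨circleMap_zero_one_ne_one (abs_lt.2 ⟨by linarith, by linarith⟩) (by linarith),
    circleMap_zero_one_ne_one (abs_lt.2 ⟨by linarith, by linarith⟩) (sub_ne_zero.2 hne.symm)⟩

theorem tendsto_legendreKernel_circleMap (hφ : φ ∈ Ioo 0 π) (hθ : θ ∈ Icc 0 π) (hne : θ ≠ φ) :
    Tendsto (fun r => legendreKernel (circleMap 0 r φ) θ) (𝓝 1)
      (𝓝 (legendreKernel (circleMap 0 1 φ) θ)) := by
  obtain ⟨hadd, hsub⟩ := circleMap_add_ne_one_and_sub_ne_one hφ hθ hne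
  simp only [legendreKernel_circleMap]
  exact (tendsto_invSqrtOneSub_circleMap hadd).mul (tendsto_invSqrtOneSub_circleMap hsub)

theorem norm_legendreKernel_circleMap_le (hφ : φ ∈ Ioo 0 π) (hθ : θ ∈ Icc 0 π) (hne : θ ≠ φ)
    (hr : r ∈ Icc 0 1) :
    ‖legendreKernel (circleMap 0 r φ) θ‖ ≤ 2 * ‖legendreKernel (circleMap 0 1 φ) θ‖ := by
  obtain ⟨hadd, hsub⟩ := circleMap_add_ne_one_and_sub_ne_one hφ hθ hne
  rw [legendreKernel_circleMap, legendreKernel_circleMap, norm_mul, norm_mul,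
    ← Real.mul_self_sqrt two_pos.le, mul_mul_mul_comm]
  gcongr
  · exact norm_invSqrtOneSub_circleMap_le hadd hr.1 hr.2
  · exact norm_invSqrtOneSub_circleMap_le hsub hr.1 hr.2

theorem ae_norm_legendreKernel_circleMap_le (hφ : φ ∈ Ioo 0 π) (hr : r ∈ Icc 0 1) :
    ∀ᵐ θ, θ ∈ Ioc 0 π →
      ‖legendreKernel (circleMap 0 r φ) θ‖ ≤ 2 * ‖legendreKernel (circleMap 0 1 φ) θ‖ := by
  filter_upwards [Measure.ae_ne volume φ] with θ hne hθ
  exact norm_legendreKernel_circleMap_le hφ (Ioc_subset_Icc_self hθ) hne hr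

theorem mapsTo_mul_circleMap_zero_one (θ : ℝ) :
    MapsTo (fun z => z * circleMap 0 1 θ) (Metric.ball 0 1) (Metric.ball 0 1) := by
  intro z hz
  simpa using hz

theorem continuousOn_legendreKernel :
    ContinuousOn (Function.uncurry legendreKernel) (Metric.ball 0 1 ×ˢ univ) := by
  have hcont := differentiableOn_invSqrtOneSub.continuousOn
  exact (hcont.comp (by fun_prop) fun p hp => mapsTo_mul_circleMap_zero_one p.2 hp.1).mul
    (hcont.comp (by fun_prop) fun p hp => mapsTo_mul_circleMap_zero_one (-p.2) hp.1)

theorem differentiableOn_legendreKernel (θ : ℝ) :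
    DifferentiableOn ℂ (legendreKernel · θ) (Metric.ball 0 1) :=
  (differentiableOn_invSqrtOneSub.comp (by fun_prop) (mapsTo_mul_circleMap_zero_one θ)).mul
    (differentiableOn_invSqrtOneSub.comp (by fun_prop) (mapsTo_mul_circleMap_zero_one (-θ)))

theorem legendreKernel_conj (hz : ‖z‖ ≤ 1) (θ : ℝ) :
    legendreKernel (conj z) θ = conj (legendreKernel z θ) := by
  have hz' (t : ℝ) : ‖z * circleMap 0 1 t‖ ≤ 1 := by simpa using hz
  rw [legendreKernel, legendreKernel, map_mul, ← invSqrtOneSub_conj (hz' θ),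
    ← invSqrtOneSub_conj (hz' (-θ)), map_mul, map_mul, conj_circleMap_zero, conj_circleMap_zero,
    neg_neg, mul_comm]

theorem legendreIntegral_conj (hz : ‖z‖ ≤ 1) :
    legendreIntegral (conj z) = conj (legendreIntegral z) := by
  simp only [legendreIntegral, legendreKernel_conj hz, intervalIntegral.intervalIntegral_conj]

theorem legendreIntegral_zero : legendreIntegral 0 = π := by
  simp [legendreIntegral, legendreKernel, invSqrtOneSub]

theorem differentiableOn_legendreIntegral :
    DifferentiableOn ℂ legendreIntegral (Metric.ball 0 1) :=
  differentiableOn_intervalIntegral Metric.isOpen_ball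
    (continuousOn_legendreKernel.mono (prod_mono_right (subset_univ _)))
    fun θ _ => differentiableOn_legendreKernel θ

theorem norm_legendreIntegral_circleMap_le (hφ : φ ∈ Ioo 0 π) (hr : r ∈ Icc 0 1) :
    ‖legendreIntegral (circleMap 0 r φ)‖ ≤
      2 * (EllK (Real.cos (φ / 2)) + EllK (Real.sin (φ / 2))) := by
  have hint := (intervalIntegrable_legendreKernel_left hφ).trans
    (intervalIntegrable_legendreKernel_right hφ)
  rw [← integral_norm_legendreKernel_circleMap_one hφ, ← intervalIntegral.integral_const_mul]
  exact intervalIntegral.norm_integral_le_of_norm_le Real.pi_pos.le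
    (ae_norm_legendreKernel_circleMap_le hφ hr) (hint.norm.const_mul 2)

theorem tendsto_legendreIntegral_circleMap (hφ : φ ∈ Ioo 0 π) :
    Tendsto (fun r => legendreIntegral (circleMap 0 r φ)) (𝓝[<] 1)
      (𝓝 (legendreIntegral (circleMap 0 1 φ))) := by
  have hint := (intervalIntegrable_legendreKernel_left hφ).trans
    (intervalIntegrable_legendreKernel_right hφ)
  have hmem : ∀ᶠ r : ℝ in 𝓝[<] 1, r ∈ Ioo (0 : ℝ) 1 := Ioo_mem_nhdsLT zero_lt_one
  refine intervalIntegral.tendsto_integral_filter_of_dominated_convergence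
    (fun θ => 2 * ‖legendreKernel (circleMap 0 1 φ) θ‖) ?_ ?_ (hint.norm.const_mul 2) ?_
  · filter_upwards [hmem] with r hr
    exact (continuousOn_legendreKernel.comp_continuous (f := fun θ => (circleMap 0 r φ, θ))
      (by fun_prop) fun θ => ⟨by simpa [abs_of_pos hr.1] using hr.2, mem_univ θ⟩
      ).aestronglyMeasurable
  · filter_upwards [hmem] with r hr
    rw [uIoc_of_le Real.pi_pos.le]
    exact ae_norm_legendreKernel_circleMap_le hφ (Ioo_subset_Icc_self hr)
  · rw [uIoc_of_le Real.pi_pos.le]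
    filter_upwards [Measure.ae_ne volume φ] with θ hne hθ
    exact (tendsto_legendreKernel_circleMap hφ (Ioc_subset_Icc_self hθ) hne).mono_left
      nhdsWithin_le_nhds

end LegendreIntegral

-- This phase cancellation is why the fourth power is weighted by `1 - z ^ 4`.
theorem one_sub_circleMap_pow_four_mul (φ : ℝ) :
    (1 - circleMap 0 1 φ ^ 4) * circleMap 0 1 (-(φ / 2)) ^ 4 = -(2 * Real.sin (2 * φ) : ℝ) * I := by
  have hprod : (1 - circleMap 0 1 φ ^ 4) * circleMap 0 1 (-(φ / 2)) ^ 4 =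
      circleMap 0 (2 * Real.sin (2 * φ)) (-π / 2) := by
    rw [circleMap_zero_pow, circleMap_zero_pow, one_pow, one_sub_circleMap_zero_one,
      circleMap_zero_mul]
    push_cast
    ring_nf
  rw [hprod, circleMap_neg_pi_div_two, zero_sub, neg_mul]

theorem re_boundary_legendreIntegral {φ : ℝ} (hφ : φ ∈ Ioo 0 π) :
    ((1 - circleMap 0 1 φ ^ 4) * legendreIntegral (circleMap 0 1 φ) ^ 4).re =
      8 * (Real.sin (2 * φ) * EllK (Real.cos (φ / 2)) ^ 3 * EllK (Real.sin (φ / 2)) -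
        Real.sin (2 * φ) * EllK (Real.cos (φ / 2)) * EllK (Real.sin (φ / 2)) ^ 3) := by
  have him (B A : ℝ) : ((B + A * I) ^ 4 : ℂ).im = 4 * (B ^ 3 * A - B * A ^ 3) := by
    simp only [pow_succ, pow_zero, one_mul, Complex.mul_re, Complex.mul_im, Complex.add_re,
      Complex.add_im, Complex.ofReal_re, Complex.ofReal_im, Complex.I_re, Complex.I_im]
    ring
  rw [legendreIntegral_circleMap_one hφ, mul_pow, ← mul_assoc, one_sub_circleMap_pow_four_mul,
    ← Complex.ofReal_neg, mul_assoc, Complex.re_ofReal_mul, Complex.I_mul_re, him]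
  ring

theorem norm_one_sub_pow_mul_legendreIntegral_pow_le {φ r : ℝ} (hφ : φ ∈ Ioo 0 π)
    (hr : r ∈ Icc 0 1) :
    ‖(1 - circleMap 0 r φ ^ 4) * legendreIntegral (circleMap 0 r φ) ^ 4‖ ≤
      256 * (EllK (Real.cos (φ / 2)) ^ 4 + EllK (Real.sin (φ / 2)) ^ 4) := by
  set B := EllK (Real.cos (φ / 2))
  set A := EllK (Real.sin (φ / 2))
  have hfactor : ‖1 - circleMap 0 r φ ^ 4‖ ≤ 2 := by
    calc ‖1 - circleMap 0 r φ ^ 4‖ ≤ ‖(1 : ℂ)‖ + ‖circleMap 0 r φ ^ 4‖ := norm_sub_le _ _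
      _ = 1 + r ^ 4 := by rw [norm_one, norm_pow, norm_circleMap_zero, abs_of_nonneg hr.1]
      _ ≤ 2 := by linarith [pow_le_one₀ (n := 4) hr.1 hr.2]
  calc ‖(1 - circleMap 0 r φ ^ 4) * legendreIntegral (circleMap 0 r φ) ^ 4‖
      = ‖1 - circleMap 0 r φ ^ 4‖ * ‖legendreIntegral (circleMap 0 r φ)‖ ^ 4 := by
        rw [norm_mul, norm_pow]
    _ ≤ 2 * (2 * (B + A)) ^ 4 := by
        gcongr
        exact norm_legendreIntegral_circleMap_le hφ hr
    _ = 32 * (B + A) ^ 4 := by ring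
    _ ≤ 32 * (2 ^ (4 - 1) * (B ^ 4 + A ^ 4)) := by
        gcongr
        exact add_pow_le (ellK_nonneg _) (ellK_nonneg _) 4
    _ = 256 * (B ^ 4 + A ^ 4) := by ring

theorem integral_sin_two_mul_mul_ellK_sub :
    ∫ φ in (0 : ℝ)..π, 8 * (Real.sin (2 * φ) * EllK (Real.cos (φ / 2)) ^ 3 *
        EllK (Real.sin (φ / 2)) - Real.sin (2 * φ) * EllK (Real.cos (φ / 2)) *
        EllK (Real.sin (φ / 2)) ^ 3) = π ^ 5 := by
  have hmean : ∫ φ in (0 : ℝ)..π,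
      ((1 - circleMap 0 1 φ ^ 4) * legendreIntegral (circleMap 0 1 φ) ^ 4).re =
      π * ((1 - (0 : ℂ) ^ 4) * legendreIntegral 0 ^ 4).re := by
    refine integral_re_radialLimit_eq_pi_mul (G := fun z => (1 - z ^ 4) * legendreIntegral z ^ 4)
      (DifferentiableOn.mul (by fun_prop) (differentiableOn_legendreIntegral.pow 4))
      (fun z hz => ?_)
      (fun φ hφ r hr => norm_one_sub_pow_mul_legendreIntegral_pow_le hφ (Ioo_subset_Icc_self hr))
      (((intervalIntegrable_ellK_cos_half_pow 4).add
        (intervalIntegrable_ellK_sin_half_pow 4)).const_mul 256)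
      fun φ hφ => ?_
    · rw [legendreIntegral_conj (mem_ball_zero_iff.1 hz).le]
      simp only [map_mul, map_sub, map_one, map_pow]
    · have hfactor : Continuous fun r : ℝ => 1 - circleMap 0 r φ ^ 4 := by
        simp only [circleMap_zero]
        fun_prop
      exact ((hfactor.tendsto 1).mono_left nhdsWithin_le_nhds).mul
        ((tendsto_legendreIntegral_circleMap hφ).pow 4)
  rw [← intervalIntegral.integral_congr_Ioo_of_le Real.pi_pos.le
    fun φ hφ => re_boundary_legendreIntegral hφ, hmean, legendreIntegral_zero,
    zero_pow four_ne_zero, sub_zero, one_mul, ← Complex.ofReal_pow, Complex.ofReal_re]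
  ring

theorem pow_mul_le_pow_succ_add_pow_succ {a b : ℝ} (ha : 0 ≤ a) (hb : 0 ≤ b) (n : ℕ) :
    b ^ n * a ≤ b ^ (n + 1) + a ^ (n + 1) := by
  calc b ^ n * a ≤ max b a ^ n * max b a := by
        gcongr
        · exact le_max_left b a
        · exact le_max_right b a
    _ = max (b ^ (n + 1)) (a ^ (n + 1)) := by
        rw [← pow_succ, (pow_left_monotoneOn (n := n + 1)).map_max hb ha]
    _ ≤ b ^ (n + 1) + a ^ (n + 1) := max_le_add_of_nonneg (by positivity) (by positivity)

theorem intervalIntegrable_sin_two_mul_mul_ellK :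
    IntervalIntegrable (fun φ => Real.sin (2 * φ) * EllK (Real.cos (φ / 2)) ^ 3 *
      EllK (Real.sin (φ / 2))) volume 0 π := by
  have hcos : Measurable fun φ : ℝ => EllK (Real.cos (φ / 2)) := measurable_ellK.comp (by fun_prop)
  have hsin : Measurable fun φ : ℝ => EllK (Real.sin (φ / 2)) := measurable_ellK.comp (by fun_prop)
  have hprod : IntervalIntegrable
      (fun φ => EllK (Real.cos (φ / 2)) ^ 3 * EllK (Real.sin (φ / 2))) volume 0 π := by
    refine ((intervalIntegrable_ellK_cos_half_pow 4).add
      (intervalIntegrable_ellK_sin_half_pow 4)).mono_fun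
      (Measurable.aestronglyMeasurable (by fun_prop)) (.of_forall fun φ => ?_)
    have hb := ellK_nonneg (Real.cos (φ / 2))
    have ha := ellK_nonneg (Real.sin (φ / 2))
    beta_reduce
    rw [Real.norm_of_nonneg (by positivity), Real.norm_of_nonneg (by positivity)]
    exact pow_mul_le_pow_succ_add_pow_succ ha hb 3
  simpa only [mul_assoc] using
    hprod.continuousOn_mul (g := fun φ => Real.sin (2 * φ)) (by fun_prop)

theorem integral_sin_two_mul_mul_ellK :
    ∫ φ in (0 : ℝ)..π, Real.sin (2 * φ) * EllK (Real.cos (φ / 2)) ^ 3 * EllK (Real.sin (φ / 2)) =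
      π ^ 5 / 16 := by
  have hreflect (φ : ℝ) : Real.sin (2 * (π - φ)) * EllK (Real.cos ((π - φ) / 2)) ^ 3 *
      EllK (Real.sin ((π - φ) / 2)) =
      -(Real.sin (2 * φ) * EllK (Real.cos (φ / 2)) * EllK (Real.sin (φ / 2)) ^ 3) := by
    rw [mul_sub, Real.sin_two_pi_sub, sub_div, Real.cos_pi_div_two_sub, Real.sin_pi_div_two_sub]
    ring
  have hint := intervalIntegrable_sin_two_mul_mul_ellK
  have hint_reflect := (hint.comp_sub_left π).symm
  have hval_reflect := intervalIntegral.integral_comp_sub_left (a := 0) (b := π)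
    (fun φ => Real.sin (2 * φ) * EllK (Real.cos (φ / 2)) ^ 3 * EllK (Real.sin (φ / 2))) π
  simp only [hreflect, sub_self, sub_zero] at hint_reflect hval_reflect
  have hsum := integral_sin_two_mul_mul_ellK_sub
  simp only [intervalIntegral.integral_const_mul, sub_eq_add_neg] at hsum
  rw [intervalIntegral.integral_add hint hint_reflect, hval_reflect] at hsum
  linarith

theorem integral_zero_one_eq_integral_cos_half {E : Type*} [NormedAddCommGroup E]
    [NormedSpace ℝ E] (g : ℝ → E) :
    ∫ k in (0 : ℝ)..1, g k =
      ∫ φ in (0 : ℝ)..π, (Real.sin (φ / 2) / 2) • g (Real.cos (φ / 2)) := by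
  have hderiv (φ : ℝ) : HasDerivAt (fun φ => Real.cos (φ / 2)) (-(Real.sin (φ / 2) / 2)) φ :=
    ((hasDerivAt_id' φ).div_const 2).cos.congr_deriv (by ring)
  have hsubst := intervalIntegral.integral_deriv_smul_comp_of_deriv_nonpos (a := 0) (b := π)
    (g := g) (f := fun φ => Real.cos (φ / 2)) (by fun_prop) (fun φ _ => hderiv φ) fun φ hφ => by
      rw [min_eq_left Real.pi_pos.le, max_eq_right Real.pi_pos.le] at hφ
      linarith [(sin_half_mem_Ioo hφ).1]
  simp only [Function.comp_apply, neg_smul, intervalIntegral.integral_neg, zero_div, Real.cos_zero,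
    Real.cos_pi_div_two] at hsubst
  rw [intervalIntegral.integral_symm, ← hsubst, neg_neg]

theorem ellK'_cos_half {φ : ℝ} (hφ : φ ∈ Icc 0 π) :
    EllK' (Real.cos (φ / 2)) = EllK (Real.sin (φ / 2)) := by
  have hsin : 0 ≤ Real.sin (φ / 2) :=
    Real.sin_nonneg_of_nonneg_of_le_pi (by linarith [hφ.1]) (by linarith [hφ.2, Real.pi_pos])
  rw [EllK', ← Real.sin_sq, Real.sqrt_sq hsin]

theorem sin_half_mul_cos_half_mul_eq_sin_two_mul (φ : ℝ) :
    Real.sin (φ / 2) * (Real.cos (φ / 2) * (2 * Real.cos (φ / 2) ^ 2 - 1)) =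
      Real.sin (2 * φ) / 4 := by
  have hsin := Real.sin_two_mul (φ / 2)
  have hcos := Real.cos_two_mul (φ / 2)
  rw [mul_div_cancel₀ φ two_ne_zero] at hsin hcos
  rw [Real.sin_two_mul, hsin, hcos]
  ring

end

theorem stmt_16 :
    ∫ k in (0:ℝ)..(1:ℝ), k * (2 * k^2 - 1) * (EllK k)^3 * EllK' k = π^5 / 128 := by
  have hsubst : Set.EqOn
      (fun φ => (Real.sin (φ / 2) / 2) • (Real.cos (φ / 2) * (2 * Real.cos (φ / 2) ^ 2 - 1) *
        EllK (Real.cos (φ / 2)) ^ 3 * EllK' (Real.cos (φ / 2))))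
      (fun φ => 1 / 8 * (Real.sin (2 * φ) * EllK (Real.cos (φ / 2)) ^ 3 *
        EllK (Real.sin (φ / 2)))) (Set.uIcc 0 π) := by
    intro φ hφ
    simp only [smul_eq_mul, ellK'_cos_half (Set.uIcc_of_le Real.pi_pos.le ▸ hφ)]
    linear_combination EllK (Real.cos (φ / 2)) ^ 3 * EllK (Real.sin (φ / 2)) / 2 *
      sin_half_mul_cos_half_mul_eq_sin_two_mul φ
  rw [integral_zero_one_eq_integral_cos_half, intervalIntegral.integral_congr hsubst,
    intervalIntegral.integral_const_mul, integral_sin_two_mul_mul_ellK]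
  ring
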